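/- For every integer d ≥ 2 the following hold: (a) for all d×d complex density matrices ρ and σ whose eigenvalue vectors satisfy λ(σ) ≺ λ(ρ), there exist d unitary d×d matrices U_1,…,U_d such that σ = (1/d)Σ_{i=1}^d U_i ρ U_i†; (b) for every integer m < d there exist d×d density matrices ρ and σ with λ(σ) ≺ λ(ρ) such that no m unitary matrices U_1,…,U_m satisfy σ = (1/m)Σ_{i=1}^m U_i ρ U_i†. Hence the minimal amount of classical randomness m*_C(d) needed to implement all majorization-allowed state transitions in dimension d equals d. -/

import Mathlib

open scoped ComplexOrder

/-- The sum of the `k` largest entries of a vector (equivalently, for vectors with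
nonnegative entries, the maximum of `∑ i ∈ s, x i` over subsets `s` of cardinality at
most `k`; this also accounts for padding with zeros). -/
noncomputable def topSum {ι : Type*} [Fintype ι] [DecidableEq ι] (x : ι → ℝ) (k : ℕ) : ℝ :=
  ((Finset.univ : Finset ι).powerset.filter (fun s => s.card ≤ k)).sup'
    ⟨∅, by simp⟩ (fun s => ∑ i ∈ s, x i)

/-- A probability vector: nonnegative entries summing to 1. -/
def IsProbVec {ι : Type*} [Fintype ι] (x : ι → ℝ) : Prop :=
  (∀ i, 0 ≤ x i) ∧ ∑ i, x i = 1

/-- `x ≺ y` (majorization, after padding with zeros to a common dimension): every partial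
sum of the `k` largest entries of `x` is at most that of `y`, with equal total sums. -/
def PMaj {ι κ : Type*} [Fintype ι] [DecidableEq ι] [Fintype κ] [DecidableEq κ]
    (x : ι → ℝ) (y : κ → ℝ) : Prop :=
  (∀ k : ℕ, topSum x k ≤ topSum y k) ∧ (∑ i, x i = ∑ j, y j)

/-- Tensor product of two vectors: `(x ⊗ y)_{(i,j)} = x_i y_j`. -/
def pvTensor {ι κ : Type*} (x : ι → ℝ) (y : κ → ℝ) : ι × κ → ℝ :=
  fun p => x p.1 * y p.2

/-!
A nonnegative vector `y` majorizing `x` can be turned into `x` by Robin Hood transfers between two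
entries. If `y` is the diagonal of a Hermitian matrix in some orthonormal basis, such a transfer is
realized by rotating two basis vectors: as the angle runs from `0` to `π / 2` the two diagonal
entries trade places, so by continuity every intermediate value occurs. Hence `ρ` has diagonal
`λ(σ)` in a suitable basis, and averaging over the conjugations by the `d` diagonal unitaries whose
phases are the characters of `ℤ / d` removes the off-diagonal entries.

Conversely, a mixture of `m` conjugates of a pure state has rank at most `m`, whereas the
maximally mixed state has rank `d`.
-/

open Matrix Relation

section TopSum

variable {ι κ : Type*} [Fintype ι] [DecidableEq ι] [Fintype κ] [DecidableEq κ]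

lemma topSum_le_iff {x : ι → ℝ} {k : ℕ} {c : ℝ} :
    topSum x k ≤ c ↔ ∀ s : Finset ι, s.card ≤ k → ∑ i ∈ s, x i ≤ c := by
  simp [topSum, Finset.sup'_le_iff]

lemma sum_le_topSum (x : ι → ℝ) {s : Finset ι} {k : ℕ} (hs : s.card ≤ k) :
    ∑ i ∈ s, x i ≤ topSum x k :=
  topSum_le_iff.1 le_rfl s hs

lemma topSum_comp_equiv_le (x : κ → ℝ) (e : ι ≃ κ) (k : ℕ) : topSum (x ∘ e) k ≤ topSum x k :=
  topSum_le_iff.2 fun s hs => by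
    simpa using sum_le_topSum x (s := s.map e.toEmbedding) (by simpa using hs)

lemma topSum_comp_equiv (x : κ → ℝ) (e : ι ≃ κ) (k : ℕ) : topSum (x ∘ e) k = topSum x k :=
  (topSum_comp_equiv_le x e k).antisymm <| by
    simpa [Function.comp_assoc] using topSum_comp_equiv_le (x ∘ e) e.symm k

lemma topSum_card_eq_sum {x : ι → ℝ} (hx : ∀ i, 0 ≤ x i) {s : Finset ι}
    (hs : ∀ i ∈ s, ∀ j ∉ s, x j ≤ x i) : topSum x s.card = ∑ i ∈ s, x i := by
  refine (topSum_le_iff.2 fun t ht => ?_).antisymm (sum_le_topSum x le_rfl)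
  rcases s.eq_empty_or_nonempty with rfl | hne
  · simp [Finset.card_eq_zero.1 (Nat.le_zero.1 ht)]
  obtain ⟨m, hm, hmin⟩ := s.exists_min_image x hne
  calc ∑ i ∈ t, x i
      = ∑ i ∈ t ∩ s, x i + ∑ i ∈ t \ s, x i := (Finset.sum_inter_add_sum_sdiff t s x).symm
    _ ≤ ∑ i ∈ t ∩ s, x i + (t \ s).card • x m := by
        gcongr
        exact Finset.sum_le_card_nsmul _ _ _ fun j hj => hs m hm j (Finset.mem_sdiff.1 hj).2
    _ ≤ ∑ i ∈ t ∩ s, x i + (s \ t).card • x m := by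
        gcongr ?_ + ?_
        · rfl
        · exact nsmul_le_nsmul_left (hx m) (Finset.card_sdiff_le_card_sdiff_iff.2 ht)
    _ ≤ ∑ i ∈ s ∩ t, x i + ∑ i ∈ s \ t, x i := by
        rw [Finset.inter_comm]
        gcongr
        exact Finset.card_nsmul_le_sum _ _ _ fun j hj => hmin j (Finset.mem_sdiff.1 hj).1
    _ = ∑ i ∈ s, x i := Finset.sum_inter_add_sum_sdiff s t x

lemma PMaj.comp_equiv {x : ι → ℝ} {y : κ → ℝ} (h : PMaj x y) (e : ι ≃ κ) : PMaj x (y ∘ e) :=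
  ⟨fun k => (h.1 k).trans_eq (topSum_comp_equiv y e k).symm, h.2.trans (e.sum_comp y).symm⟩

end TopSum

lemma exists_perm_monovary {ι α β : Type*} [Finite ι] [LinearOrder α] [LinearOrder β]
    (f : ι → α) (g : ι → β) : ∃ π : Equiv.Perm ι, Monovary f (g ∘ π) := by
  obtain ⟨n, ⟨e⟩⟩ := Finite.exists_equiv_fin ι
  let a := Tuple.sort (f ∘ e.symm)
  let b := Tuple.sort (g ∘ e.symm)
  refine ⟨(e.trans a.symm).trans (b.trans e.symm), ?_⟩
  have h := ((Tuple.monotone_sort (f ∘ e.symm)).monovary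
    (Tuple.monotone_sort (g ∘ e.symm))).comp_right (e.trans a.symm)
  have hf : ((f ∘ e.symm) ∘ a) ∘ e.trans a.symm = f := by ext; simp
  rwa [hf] at h

section Superlevel

variable {ι : Type*} [Fintype ι]

/-- Majorization of `x` by `y` tested only on the superlevel sets of `x`. It presupposes that the
entries of `y` are arranged in the order of those of `x`, and in exchange mentions no
rearrangement. -/
def SuperlevelMaj (x y : ι → ℝ) : Prop :=
  (∀ t, ∑ i with t ≤ x i, x i ≤ ∑ i with t ≤ x i, y i) ∧ ∑ i, x i = ∑ i, y i

lemma SuperlevelMaj.exists_surplus_deficit {x y : ι → ℝ} (h : SuperlevelMaj x y) (hne : y ≠ x) :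
    ∃ j k, x j < y j ∧ y k < x k ∧ x k ≤ x j ∧ ∀ i, x k < x i → x i ≤ y i := by
  have hdeficit : (Finset.univ.filter fun i => y i < x i).Nonempty := by
    by_contra hempty
    have hle : ∀ i, x i ≤ y i := by simpa [Finset.filter_eq_empty_iff] using hempty
    exact hne <| funext fun i =>
      ((Finset.sum_eq_sum_iff_of_le fun i _ => hle i).1 h.2 i (Finset.mem_univ i)).symm
  obtain ⟨k, hk, hmax⟩ := Finset.exists_max_image _ x hdeficit
  simp only [Finset.mem_filter_univ] at hk hmax
  obtain ⟨j, hj, hxj⟩ : ∃ j, x k ≤ x j ∧ x j < y j := by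
    by_contra! hno
    refine (h.1 (x k)).not_gt (Finset.sum_lt_sum (fun i hi => hno i ?_) ⟨k, ?_, hk⟩) <;> simp_all
  exact ⟨j, k, hxj, hk, hj, fun i hi => le_of_not_gt fun hlt => (hmax i hlt).not_gt hi⟩

lemma PMaj.superlevelMaj [DecidableEq ι] {x y : ι → ℝ} (h : PMaj x y) (hy : ∀ i, 0 ≤ y i)
    (hxy : Monovary x y) : SuperlevelMaj x y := by
  refine ⟨fun t => ?_, h.2⟩
  have hupper : ∀ i ∈ ({i | t ≤ x i} : Finset ι), ∀ j ∉ ({i | t ≤ x i} : Finset ι), y j ≤ y i :=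
    fun i hi j hj => le_of_not_gt fun hlt => by
      simp only [Finset.mem_filter_univ] at hi hj
      exact hj (hi.trans (hxy hlt))
  calc ∑ i with t ≤ x i, x i ≤ topSum x (Finset.card {i | t ≤ x i}) := sum_le_topSum x le_rfl
    _ ≤ topSum y (Finset.card {i | t ≤ x i}) := h.1 _
    _ = ∑ i with t ≤ x i, y i := topSum_card_eq_sum hy hupper

end Superlevel

section Transfer

variable {ι : Type*} [DecidableEq ι]

/-- `z` arises from `y` by a Robin Hood transfer (a T-transform): an amount `δ` is moved from
entry `i` to entry `j` without increasing the distance between the two. Both signs of `δ` are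
admitted, so that swapping two entries is a transfer. -/
def IsTransfer (y z : ι → ℝ) : Prop :=
  ∃ i j δ, i ≠ j ∧ δ ∈ Set.uIcc 0 (y i - y j) ∧ z = y - Pi.single i δ + Pi.single j δ

lemma isTransfer_comp_swap (y : ι → ℝ) {i j : ι} (hij : i ≠ j) :
    IsTransfer y (y ∘ Equiv.swap i j) := by
  refine ⟨i, j, y i - y j, hij, Set.right_mem_uIcc, funext fun k => ?_⟩
  rcases eq_or_ne k i with rfl | hki
  · simp [hij]
  rcases eq_or_ne k j with rfl | hkj
  · simp [hki]
  simp [Equiv.swap_apply_of_ne_of_ne, hki, hkj]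

lemma reflTransGen_isTransfer_comp_perm [Finite ι] (y : ι → ℝ) (π : Equiv.Perm ι) :
    ReflTransGen IsTransfer y (y ∘ π) := by
  induction π using Equiv.Perm.swap_induction_on' with
  | one => exact .refl
  | mul_swap π i j hij h => exact h.tail (isTransfer_comp_swap (y ∘ π) hij)

variable [Fintype ι]

lemma SuperlevelMaj.transfer {x y : ι → ℝ} (h : SuperlevelMaj x y) {j k : ι} {δ : ℝ}
    (hkj : x k ≤ x j) (habove : ∀ i, x k < x i → x i ≤ y i) (hδ : δ ≤ y j - x j) :
    SuperlevelMaj x (y - Pi.single j δ + Pi.single k δ) := by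
  refine ⟨fun t => ?_, by simpa [Finset.sum_add_distrib, Finset.sum_sub_distrib] using h.2⟩
  simp only [Pi.add_apply, Pi.sub_apply, Finset.sum_add_distrib, Finset.sum_sub_distrib,
    Finset.sum_pi_single', Finset.mem_filter_univ]
  have hle := h.1 t
  by_cases hk : t ≤ x k
  · simpa [hk, hk.trans hkj] using hle
  by_cases hj : t ≤ x j
  · -- all of the superlevel set lies above `x k`, so the surplus at `j` is not cancelled
    have hnonneg : ∀ i ∈ Finset.univ.filter (t ≤ x ·), 0 ≤ y i - x i := fun i hi =>
      sub_nonneg.2 (habove i ((not_le.1 hk).trans_le (Finset.mem_filter_univ i |>.1 hi)))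
    have hsurplus : y j - x j ≤ ∑ i with t ≤ x i, (y i - x i) :=
      Finset.single_le_sum hnonneg (by simpa using hj)
    rw [Finset.sum_sub_distrib] at hsurplus
    simp only [hj, hk, if_true, if_false]
    linarith
  · simpa [hj, hk] using hle

lemma SuperlevelMaj.exists_isTransfer {x y : ι → ℝ} (h : SuperlevelMaj x y) (hne : y ≠ x) :
    ∃ z, IsTransfer y z ∧ SuperlevelMaj x z ∧
      Finset.card {i | z i ≠ x i} < Finset.card {i | y i ≠ x i} := by
  obtain ⟨j, k, hj, hk, hkj, habove⟩ := h.exists_surplus_deficit hne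
  have hjk : j ≠ k := by rintro rfl; exact hj.not_gt hk
  -- the largest amount overshooting neither target: one of the two entries becomes correct
  set δ := min (y j - x j) (x k - y k) with hδ
  have hδj : δ ≤ y j - x j := min_le_left _ _
  have hδk : δ ≤ x k - y k := min_le_right _ _
  have hδ0 : 0 < δ := lt_min (by linarith) (by linarith)
  set z := y - Pi.single j δ + Pi.single k δ with hz
  have hzj : z j = y j - δ := by simp [hz, hjk]
  have hzk : z k = y k + δ := by simp [hz, hjk.symm]
  have hzi : ∀ i, i ≠ j → i ≠ k → z i = y i := fun i hij hik => by simp [hz, hij, hik]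
  have hfixed : z j = x j ∨ z k = x k :=
    (min_choice (y j - x j) (x k - y k)).imp (fun h => by linarith) (fun h => by linarith)
  refine ⟨z, ⟨j, k, δ, hjk, Set.mem_uIcc_of_le hδ0.le (by linarith), rfl⟩,
    h.transfer hkj habove hδj, Finset.card_lt_card ?_⟩
  rw [Finset.ssubset_iff_of_subset]
  · rcases hfixed with hfix | hfix
    exacts [⟨j, by simpa using hj.ne', by simpa using hfix⟩,
      ⟨k, by simpa using hk.ne, by simpa using hfix⟩]
  · intro i hi
    rcases eq_or_ne i j with rfl | hij
    · simpa using hj.ne'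
    rcases eq_or_ne i k with rfl | hik
    · simpa using hk.ne
    simpa [hzi i hij hik] using hi

theorem SuperlevelMaj.reflTransGen_isTransfer {x y : ι → ℝ} (h : SuperlevelMaj x y) :
    ReflTransGen IsTransfer y x := by
  induction hN : Finset.card {i | y i ≠ x i} using Nat.strong_induction_on generalizing y with
  | _ N ih =>
  by_cases hyx : y = x
  · exact hyx ▸ .refl
  obtain ⟨z, hyz, hz, hcard⟩ := h.exists_isTransfer hyx
  exact .head hyz (ih _ (hN ▸ hcard) hz rfl)

theorem PMaj.reflTransGen_isTransfer {x y : ι → ℝ} (h : PMaj x y) (hy : ∀ i, 0 ≤ y i) :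
    ReflTransGen IsTransfer y x := by
  obtain ⟨π, hπ⟩ := exists_perm_monovary x y
  exact (reflTransGen_isTransfer_comp_perm y π).trans
    ((h.comp_equiv π).superlevelMaj (fun i => hy (π i)) hπ).reflTransGen_isTransfer

end Transfer

section GivensRotation

lemma ofReal_cos_sq_add_sin_sq (𝕜 : Type*) [RCLike 𝕜] (θ : ℝ) :
    (Real.cos θ : 𝕜) ^ 2 + (Real.sin θ : 𝕜) ^ 2 = 1 := by
  exact_mod_cast Real.cos_sq_add_sin_sq θ

lemma mul_mul_conjTranspose_apply {R m n : Type*} [Fintype n] [NonUnitalSemiring R] [Star R]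
    (W : Matrix m n R) (A : Matrix n n R) (k l : m) :
    (W * A * Wᴴ) k l = W.row k ⬝ᵥ (A *ᵥ star (W.row l)) := by
  rw [Matrix.mul_assoc, Matrix.mul_apply]
  rfl

variable {𝕜 n : Type*} [RCLike 𝕜] [DecidableEq n]

/-- The Givens rotation by the angle `θ` in the plane of the `i`-th and `j`-th coordinates,
given by its rows. It is a rotation only when `i ≠ j`. -/
noncomputable def givensRotation (𝕜 : Type*) [RCLike 𝕜] (i j : n) (θ : ℝ) : Matrix n n 𝕜 :=
  Matrix.of fun k =>
    if k = i then Pi.single i (Real.cos θ : 𝕜) + Pi.single j (Real.sin θ : 𝕜)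
    else if k = j then Pi.single i (-Real.sin θ : 𝕜) + Pi.single j (Real.cos θ : 𝕜)
    else Pi.single k 1

lemma givensRotation_row_left (i j : n) (θ : ℝ) :
    (givensRotation 𝕜 i j θ).row i =
      Pi.single i (Real.cos θ : 𝕜) + Pi.single j (Real.sin θ : 𝕜) :=
  if_pos rfl

lemma givensRotation_row_right {i j : n} (hij : i ≠ j) (θ : ℝ) :
    (givensRotation 𝕜 i j θ).row j =
      Pi.single i (-Real.sin θ : 𝕜) + Pi.single j (Real.cos θ : 𝕜) :=
  (if_neg hij.symm).trans (if_pos rfl)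

lemma givensRotation_row_of_ne {i j k : n} (hki : k ≠ i) (hkj : k ≠ j) (θ : ℝ) :
    (givensRotation 𝕜 i j θ).row k = Pi.single k 1 :=
  (if_neg hki).trans (if_neg hkj)

variable [Fintype n]

lemma givensRotation_mem_unitaryGroup {i j : n} (hij : i ≠ j) (θ : ℝ) :
    givensRotation 𝕜 i j θ ∈ unitaryGroup n 𝕜 := by
  have hcs := ofReal_cos_sq_add_sin_sq 𝕜 θ
  rw [mem_unitaryGroup_iff, star_eq_conjTranspose]
  ext k l
  change (givensRotation 𝕜 i j θ).row k ⬝ᵥ star ((givensRotation 𝕜 i j θ).row l) = _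
  have hcases : ∀ m, m = i ∨ m = j ∨ m ≠ i ∧ m ≠ j := fun m => by tauto
  have hi := givensRotation_row_left (𝕜 := 𝕜) i j θ
  have hj := givensRotation_row_right (𝕜 := 𝕜) hij θ
  rcases hcases k with hk | hk | ⟨hki, hkj⟩ <;> rcases hcases l with hl | hl | ⟨hli, hlj⟩
  all_goals
    simp only [*, givensRotation_row_of_ne, ne_eq, not_false_eq_true]
    simp [*, Matrix.one_apply, Ne.symm, Pi.single_apply, mul_comm]
  · linear_combination hcs
  · linear_combination hcs
  · simp only [eq_comm]

lemma givensRotation_conj_apply_left (i j : n) (θ : ℝ) (B : Matrix n n 𝕜) :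
    (givensRotation 𝕜 i j θ * B * (givensRotation 𝕜 i j θ)ᴴ) i i =
      Real.cos θ ^ 2 * B i i + Real.cos θ * Real.sin θ * (B i j + B j i)
        + Real.sin θ ^ 2 * B j j := by
  rw [mul_mul_conjTranspose_apply, givensRotation_row_left]
  simp only [star_add, Pi.star_single, RCLike.star_def, RCLike.conj_ofReal, mulVec_add,
    mulVec_single, op_smul_eq_smul, algebraMap_smul, dotProduct_add, dotProduct_smul,
    add_dotProduct, single_dotProduct, col_apply, RCLike.real_smul_eq_coe_mul]
  ring

lemma givensRotation_conj_apply_right {i j : n} (hij : i ≠ j) (θ : ℝ) (B : Matrix n n 𝕜) :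
    (givensRotation 𝕜 i j θ * B * (givensRotation 𝕜 i j θ)ᴴ) j j =
      Real.sin θ ^ 2 * B i i - Real.cos θ * Real.sin θ * (B i j + B j i)
        + Real.cos θ ^ 2 * B j j := by
  rw [mul_mul_conjTranspose_apply, givensRotation_row_right hij]
  simp only [star_add, Pi.star_single, star_neg, RCLike.star_def, RCLike.conj_ofReal, mulVec_add,
    mulVec_single, MulOpposite.op_neg, neg_smul, op_smul_eq_smul, algebraMap_smul, dotProduct_add,
    dotProduct_neg, dotProduct_smul, add_dotProduct, single_dotProduct, col_apply,
    RCLike.real_smul_eq_coe_mul]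
  ring

lemma givensRotation_conj_apply_of_ne {i j k : n} (hki : k ≠ i) (hkj : k ≠ j) (θ : ℝ)
    (B : Matrix n n 𝕜) :
    (givensRotation 𝕜 i j θ * B * (givensRotation 𝕜 i j θ)ᴴ) k k = B k k := by
  rw [mul_mul_conjTranspose_apply, givensRotation_row_of_ne hki hkj]
  simp

end GivensRotation

section UnitaryDiagonal

variable {𝕜 n : Type*} [RCLike 𝕜] [Fintype n] [DecidableEq n]

/-- `x` is the diagonal of some unitary conjugate of `A`, that is, the list of diagonal entries of
`A` in some orthonormal basis. -/
def HasUnitaryDiag (A : Matrix n n 𝕜) (x : n → ℝ) : Prop :=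
  ∃ W ∈ unitaryGroup n 𝕜, ∀ k, (W * A * Wᴴ) k k = x k

lemma hasUnitaryDiag_eigenvalues {A : Matrix n n 𝕜} (hA : A.IsHermitian) :
    HasUnitaryDiag A hA.eigenvalues := by
  refine ⟨star hA.eigenvectorUnitary, (star hA.eigenvectorUnitary).2, fun k => ?_⟩
  have h := hA.conjStarAlgAut_star_eigenvectorUnitary
  rw [Unitary.conjStarAlgAut_star_apply] at h
  simp [← star_eq_conjTranspose, h]

lemma HasUnitaryDiag.of_unitary_conj {A W : Matrix n n 𝕜}
    (hW : W ∈ unitaryGroup n 𝕜) {x : n → ℝ} (h : HasUnitaryDiag (W * A * Wᴴ) x) :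
    HasUnitaryDiag A x := by
  obtain ⟨V, hV, hdiag⟩ := h
  exact ⟨V * W, mul_mem hV hW, by simpa [conjTranspose_mul, Matrix.mul_assoc] using hdiag⟩

lemma exists_cos_sin_quadratic_eq {a b t : ℝ} (h : ℝ) (ht : t ∈ Set.uIcc a b) :
    ∃ θ : ℝ, Real.cos θ ^ 2 * a + Real.cos θ * Real.sin θ * h + Real.sin θ ^ 2 * b = t := by
  have hcont : ContinuousOn (fun θ : ℝ => Real.cos θ ^ 2 * a + Real.cos θ * Real.sin θ * h
      + Real.sin θ ^ 2 * b) (Set.uIcc 0 (Real.pi / 2)) := by fun_prop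
  obtain ⟨θ, -, hθ⟩ := intermediate_value_uIcc hcont (by simpa using ht)
  exact ⟨θ, hθ⟩

lemma HasUnitaryDiag.of_isTransfer {A : Matrix n n 𝕜} (hA : A.IsHermitian) {y z : n → ℝ}
    (hy : HasUnitaryDiag A y) (hyz : IsTransfer y z) : HasUnitaryDiag A z := by
  obtain ⟨W, hW, hdiag⟩ := hy
  obtain ⟨i, j, δ, hij, hδ, rfl⟩ := hyz
  refine .of_unitary_conj hW ?_
  set B := W * A * Wᴴ
  have hB : B.IsHermitian := isHermitian_mul_mul_conjTranspose W hA
  have ht : y i - δ ∈ Set.uIcc (y i) (y j) := by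
    rcases Set.mem_uIcc.1 hδ with h | h
    exacts [Set.mem_uIcc_of_ge (by linarith) (by linarith),
      Set.mem_uIcc_of_le (by linarith) (by linarith)]
  obtain ⟨θ, hθ⟩ := exists_cos_sin_quadratic_eq (2 * RCLike.re (B i j)) ht
  have hoff : B i j + B j i = 2 * (RCLike.re (B i j) : 𝕜) := by
    rw [← hB.apply j i, ← RCLike.add_conj, starRingEnd_apply]
  have hθ' : (Real.cos θ ^ 2 * B i i + Real.cos θ * Real.sin θ * (B i j + B j i)
      + Real.sin θ ^ 2 * B j j : 𝕜) = y i - δ := by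
    rw [hdiag, hdiag, hoff]
    exact_mod_cast hθ
  have hcs := ofReal_cos_sq_add_sin_sq 𝕜 θ
  refine ⟨givensRotation 𝕜 i j θ, givensRotation_mem_unitaryGroup hij θ, fun k => ?_⟩
  rcases eq_or_ne k i with rfl | hki
  · rw [givensRotation_conj_apply_left, hθ']
    simp [hij]
  rcases eq_or_ne k j with rfl | hkj
  · rw [givensRotation_conj_apply_right hij]
    simp only [hdiag, Pi.add_apply, Pi.sub_apply, Pi.single_eq_of_ne hki,
      Pi.single_eq_same, sub_zero, map_add] at hθ' ⊢
    linear_combination (y i + y k : 𝕜) * hcs - hθ'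
  · rw [givensRotation_conj_apply_of_ne hki hkj, hdiag]
    simp [hki, hkj]

theorem HasUnitaryDiag.of_pmaj {A : Matrix n n 𝕜} (hA : A.IsHermitian) {x y : n → ℝ}
    (hy : HasUnitaryDiag A y) (hy0 : ∀ i, 0 ≤ y i) (h : PMaj x y) : HasUnitaryDiag A x := by
  have hchain := h.reflTransGen_isTransfer hy0
  clear h
  induction hchain with
  | refl => exact hy
  | tail _ hstep ih => exact ih.of_isTransfer hA hstep

/-- The Horn half of the Schur–Horn theorem. -/
theorem hasUnitaryDiag_of_pmaj_eigenvalues {A : Matrix n n 𝕜} (hA : A.PosSemidef) {x : n → ℝ}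
    (h : PMaj x hA.isHermitian.eigenvalues) : HasUnitaryDiag A x :=
  (hasUnitaryDiag_eigenvalues hA.isHermitian).of_pmaj hA.isHermitian hA.eigenvalues_nonneg h

end UnitaryDiagonal

section Dephasing

variable {n G : Type*} [AddCommGroup G] [DecidableEq n]

/-- The diagonal unitary whose phases are the values of the character `ψ` at the labels `e` of the
coordinates. -/
def phaseMatrix (e : n → G) (ψ : AddChar G ℂ) : Matrix n n ℂ :=
  diagonal (ψ ∘ e)

variable [Fintype n]

lemma phaseMatrix_mem_unitaryGroup [Finite G] (e : n → G) (ψ : AddChar G ℂ) :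
    phaseMatrix e ψ ∈ unitaryGroup n ℂ := by
  have hψ : ∀ g, ψ g * star (ψ g) = 1 := fun g => by
    rw [Complex.star_def, ← AddChar.map_neg_eq_conj, ← AddChar.map_add_eq_mul, add_neg_cancel,
      AddChar.map_zero_eq_one]
  rw [mem_unitaryGroup_iff, star_eq_conjTranspose, phaseMatrix, diagonal_conjTranspose,
    diagonal_mul_diagonal, ← diagonal_one]
  exact congrArg diagonal (funext fun k => hψ (e k))

lemma phaseMatrix_conj_apply [Finite G] (e : n → G) (ψ : AddChar G ℂ) (A : Matrix n n ℂ)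
    (k l : n) :
    (phaseMatrix e ψ * A * (phaseMatrix e ψ)ᴴ) k l = A k l * ψ (e k - e l) := by
  simp only [phaseMatrix, diagonal_conjTranspose, mul_diagonal, diagonal_mul, Function.comp_apply,
    Pi.star_apply, RCLike.star_def, sub_eq_add_neg, AddChar.map_add_eq_mul, AddChar.map_neg_eq_conj]
  ring

lemma sum_phaseMatrix_conj [Fintype G] {e : n → G} (he : Function.Injective e)
    (A : Matrix n n ℂ) :
    ∑ ψ, phaseMatrix e ψ * A * (phaseMatrix e ψ)ᴴ = (Fintype.card G : ℂ) • diagonal A.diag := by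
  classical
  ext k l
  simp only [Matrix.sum_apply, phaseMatrix_conj_apply, ← Finset.mul_sum,
    AddChar.sum_apply_eq_ite, sub_eq_zero, he.eq_iff]
  rcases eq_or_ne k l with rfl | hkl
  · simp [mul_comm]
  · simp [hkl]

end Dephasing

theorem exists_uniform_unitary_mixture_of_pmaj {n : Type*} [Fintype n] [DecidableEq n] [Nonempty n]
    {ρ σ : Matrix n n ℂ} (hρ : ρ.PosSemidef) (hσ : σ.IsHermitian)
    (h : PMaj hσ.eigenvalues hρ.isHermitian.eigenvalues) :
    ∃ U : n → Matrix n n ℂ, (∀ i, U i ∈ unitaryGroup n ℂ) ∧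
      σ = (Fintype.card n : ℂ)⁻¹ • ∑ i, U i * ρ * (U i)ᴴ := by
  obtain ⟨W, hW, hdiag⟩ := hasUnitaryDiag_of_pmaj_eigenvalues hρ h
  let e : n ≃ ZMod (Fintype.card n) := Fintype.equivOfCardEq (ZMod.card _).symm
  let ψ : n ≃ AddChar (ZMod (Fintype.card n)) ℂ :=
    Fintype.equivOfCardEq (by rw [AddChar.card_eq, ZMod.card])
  set V : Matrix n n ℂ := ↑hσ.eigenvectorUnitary
  refine ⟨fun i => V * phaseMatrix e (ψ i) * W, fun i => mul_mem (mul_mem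
    hσ.eigenvectorUnitary.2 (phaseMatrix_mem_unitaryGroup e (ψ i))) hW, ?_⟩
  have hdephase : (Fintype.card n : ℂ)⁻¹ •
      ∑ i, phaseMatrix e (ψ i) * (W * ρ * Wᴴ) * (phaseMatrix e (ψ i))ᴴ
        = diagonal (RCLike.ofReal ∘ hσ.eigenvalues) := by
    rw [ψ.sum_comp fun χ => phaseMatrix e χ * (W * ρ * Wᴴ) * (phaseMatrix e χ)ᴴ,
      sum_phaseMatrix_conj e.injective, ZMod.card, inv_smul_smul₀ (by simp)]
    congr 1
    exact funext hdiag
  calc σ = V * diagonal (RCLike.ofReal ∘ hσ.eigenvalues) * Vᴴ := hσ.spectral_theorem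
    _ = _ := by
      rw [← hdephase]
      simp only [Matrix.mul_smul, Matrix.smul_mul, Finset.mul_sum, Finset.sum_mul,
        conjTranspose_mul, Matrix.mul_assoc]

section LowerBound

lemma pmaj_of_isProbVec_of_apply_eq_one {ι κ : Type*} [Fintype ι] [DecidableEq ι] [Fintype κ]
    [DecidableEq κ] {x : ι → ℝ} {y : κ → ℝ} (hx : IsProbVec x) (hy : ∑ i, y i = 1) {j : κ}
    (hj : y j = 1) : PMaj x y := by
  refine ⟨fun k => topSum_le_iff.2 fun s hs => ?_, hx.2.trans hy.symm⟩
  rcases s.eq_empty_or_nonempty with rfl | hne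
  · simpa using sum_le_topSum y (s := ∅) hs
  · calc ∑ i ∈ s, x i ≤ ∑ i, x i :=
          Finset.sum_le_sum_of_subset_of_nonneg (Finset.subset_univ s) fun i _ _ => hx.1 i
      _ = ∑ i ∈ {j}, y i := by simp [hx.2, hj]
      _ ≤ topSum y k := sum_le_topSum y (hne.card_pos.trans_le hs)

variable {n : Type*} [Fintype n] [DecidableEq n]

section Eigenvalues

variable {𝕜 : Type*} [RCLike 𝕜]

lemma sum_eigenvalues_eq_one {A : Matrix n n 𝕜} (hA : A.IsHermitian) (htr : A.trace = 1) :
    ∑ i, hA.eigenvalues i = 1 := by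
  exact_mod_cast hA.trace_eq_sum_eigenvalues.symm.trans htr

lemma exists_eigenvalues_eq_one_of_rank_le_one {A : Matrix n n 𝕜} (hA : A.IsHermitian)
    (htr : A.trace = 1) (hrank : A.rank ≤ 1) : ∃ j, hA.eigenvalues j = 1 := by
  have hsum := sum_eigenvalues_eq_one hA htr
  rw [hA.rank_eq_card_non_zero_eigs, Fintype.card_le_one_iff] at hrank
  obtain ⟨j, -, hj⟩ := Finset.exists_ne_zero_of_sum_ne_zero (hsum.trans_ne one_ne_zero)
  refine ⟨j, (Fintype.sum_eq_single j fun i hij => ?_).symm.trans hsum⟩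
  by_contra hi
  exact hij (congrArg Subtype.val (hrank ⟨i, hi⟩ ⟨j, hj⟩))

lemma pmaj_eigenvalues_of_rank_le_one {A B : Matrix n n 𝕜} (hA : A.PosSemidef)
    (hAtr : A.trace = 1) (hB : B.IsHermitian) (hBtr : B.trace = 1) (hrank : B.rank ≤ 1) :
    PMaj hA.isHermitian.eigenvalues hB.eigenvalues := by
  obtain ⟨j, hj⟩ := exists_eigenvalues_eq_one_of_rank_le_one hB hBtr hrank
  exact pmaj_of_isProbVec_of_apply_eq_one
    ⟨hA.eigenvalues_nonneg, sum_eigenvalues_eq_one hA.isHermitian hAtr⟩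
    (sum_eigenvalues_eq_one hB hBtr) hj

end Eigenvalues

lemma rank_sum_mul_mul_le {F l m p q ι : Type*} [Field F] [Fintype m] [Fintype p]
    [Fintype q] [Fintype ι] (K : ι → Matrix l m F) (A : Matrix m p F) (L : ι → Matrix p q F) :
    (∑ k, K k * A * L k).rank ≤ Fintype.card ι * A.rank := by
  have hsum : (∑ k, K k * A * L k).rank ≤ ∑ k, (K k * A * L k).rank := by
    have hlin : (∑ k, K k * A * L k).mulVecLin = ∑ k, (K k * A * L k).mulVecLin :=
      LinearMap.ext fun v => by simp
    have h := LinearMap.rank_finsetSum_le Finset.univ fun k => (K k * A * L k).mulVecLin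
    rw [← hlin] at h
    simp only [LinearMap.rank, ← Module.finrank_eq_rank] at h
    exact_mod_cast h
  calc (∑ k, K k * A * L k).rank ≤ ∑ k, (K k * A * L k).rank := hsum
    _ ≤ ∑ _k : ι, A.rank := Finset.sum_le_sum fun k _ =>
        (rank_mul_le_left _ _).trans (rank_mul_le_right _ _)
    _ = Fintype.card ι * A.rank := by simp

lemma exists_pmaj_forall_eq_smul_sum_card_le (n : Type*) [Fintype n] [DecidableEq n] [Nonempty n] :
    ∃ (ρ σ : Matrix n n ℂ) (hρ : ρ.PosSemidef) (hσ : σ.PosSemidef),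
      ρ.trace = 1 ∧ σ.trace = 1 ∧
      PMaj hσ.isHermitian.eigenvalues hρ.isHermitian.eigenvalues ∧
      ∀ (m : ℕ) (c : ℂ) (K : Fin m → Matrix n n ℂ),
        σ = c • ∑ i, K i * ρ * (K i)ᴴ → Fintype.card n ≤ m := by
  obtain ⟨i₀⟩ := ‹Nonempty n›
  have hn : (Fintype.card n : ℂ) ≠ 0 := Nat.cast_ne_zero.2 Fintype.card_ne_zero
  set ρ : Matrix n n ℂ := diagonal (Pi.single i₀ 1)
  set σ : Matrix n n ℂ := (Fintype.card n : ℂ)⁻¹ • 1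
  have hρ : ρ.PosSemidef := .diagonal (Pi.single_nonneg.2 zero_le_one)
  have hσ : σ.PosSemidef := PosSemidef.one.smul (by positivity)
  have hρtr : ρ.trace = 1 := by simp [ρ]
  have hσtr : σ.trace = 1 := by simp [σ]
  have hρrank : ρ.rank ≤ 1 := by
    rw [rank_diagonal, Fintype.card_le_one_iff]
    simp [Pi.single_apply]
  have hσrank : σ.rank = Fintype.card n :=
    rank_of_isUnit _ (isUnit_one.smul (Units.mk0 _ (inv_ne_zero hn)))
  refine ⟨ρ, σ, hρ, hσ, hρtr, hσtr,
    pmaj_eigenvalues_of_rank_le_one hσ hσtr hρ.isHermitian hρtr hρrank, fun m c K hK => ?_⟩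
  calc Fintype.card n = (∑ i, (c • K i) * ρ * (K i)ᴴ).rank := by
        simpa only [hσrank, Finset.smul_sum, Matrix.smul_mul] using congrArg rank hK
    _ ≤ Fintype.card (Fin m) * ρ.rank := rank_sum_mul_mul_le _ ρ _
    _ ≤ m := by simpa using Nat.mul_le_mul_left m hρrank

end LowerBound

theorem classical_randomness_cost_general (n : Type*) [Fintype n] [DecidableEq n] [Nonempty n] :
    (∀ (ρ σ : Matrix n n ℂ) (hρ : ρ.PosSemidef) (hσ : σ.IsHermitian),
        PMaj hσ.eigenvalues hρ.isHermitian.eigenvalues →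
        ∃ U : n → Matrix n n ℂ, (∀ i, U i ∈ unitaryGroup n ℂ) ∧
          σ = (Fintype.card n : ℂ)⁻¹ • ∑ i, U i * ρ * (U i)ᴴ) ∧
    ∃ (ρ σ : Matrix n n ℂ) (hρ : ρ.PosSemidef) (hσ : σ.PosSemidef),
      ρ.trace = 1 ∧ σ.trace = 1 ∧
      PMaj hσ.isHermitian.eigenvalues hρ.isHermitian.eigenvalues ∧
      ∀ (m : ℕ) (c : ℂ) (K : Fin m → Matrix n n ℂ),
        σ = c • ∑ i, K i * ρ * (K i)ᴴ → Fintype.card n ≤ m :=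
  ⟨fun _ _ hρ hσ => exists_uniform_unitary_mixture_of_pmaj hρ hσ,
    exists_pmaj_forall_eq_smul_sum_card_le n⟩

/-- Boes–Eisert–Gallego–Müller–Wilming: the minimal amount of classical randomness needed
to implement all majorization-allowed state transitions in dimension `d` equals `d`:
(a) `d` unitaries always suffice; (b) for every `m < d` there is a majorization-allowed
transition that cannot be implemented as a uniform mixture of `m` unitary conjugations. -/
theorem classical_randomness_cost (d : ℕ) (hd : 2 ≤ d) :
    (∀ (ρ σ : Matrix (Fin d) (Fin d) ℂ) (hρ : ρ.PosSemidef) (hσ : σ.PosSemidef),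
        ρ.trace = 1 → σ.trace = 1 →
        PMaj hσ.isHermitian.eigenvalues hρ.isHermitian.eigenvalues →
        ∃ U : Fin d → Matrix (Fin d) (Fin d) ℂ,
          (∀ i, U i ∈ Matrix.unitaryGroup (Fin d) ℂ) ∧
          σ = ((d : ℂ))⁻¹ • ∑ i, U i * ρ * (U i).conjTranspose) ∧
    (∀ m : ℕ, m < d →
      ∃ (ρ σ : Matrix (Fin d) (Fin d) ℂ) (hρ : ρ.PosSemidef) (hσ : σ.PosSemidef),
        ρ.trace = 1 ∧ σ.trace = 1 ∧
        PMaj hσ.isHermitian.eigenvalues hρ.isHermitian.eigenvalues ∧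
        ¬ ∃ U : Fin m → Matrix (Fin d) (Fin d) ℂ,
          (∀ i, U i ∈ Matrix.unitaryGroup (Fin d) ℂ) ∧
          σ = ((m : ℂ))⁻¹ • ∑ i, U i * ρ * (U i).conjTranspose) := by
  have : NeZero d := ⟨by omega⟩
  obtain ⟨hupper, ρ, σ, hρ, hσ, hρtr, hσtr, hmaj, hlower⟩ :=
    classical_randomness_cost_general (Fin d)
  simp only [Fintype.card_fin] at hupper hlower
  refine ⟨fun ρ σ hρ hσ _ _ => hupper ρ σ hρ hσ.isHermitian, fun m hm => ?_⟩
  exact ⟨ρ, σ, hρ, hσ, hρtr, hσtr, hmaj, fun ⟨U, _, hU⟩ => hm.not_ge (hlower m _ U hU)⟩
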